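/- Let p be a prime, let c = ⌈p/2⌉/p, let i be a natural number, and let d > 0 be a real number. Suppose that every nonempty open subinterval of [0,1] of length greater than d contains a point of Q_p^i. Then every nonempty open subinterval of [0,1] of length greater than c·d contains a point of Q_p^{i+1}. -/

import Mathlib

/-!
Write `c = ratioC p`; then `c ≥ 1/2`. An interval `(a, b)` with `b ≤ c` is the image under `x ↦ c x`
of a subinterval of `[0, 1]` that is longer by the factor `1 / c`, and one with `1 - c ≤ a` is such an
image under `x ↦ 1 - c x`, so the hypothesis on `Q_p^i` applies. In the remaining case
`a < 1 - c ≤ c < b`, so `(a, b)` contains `c = c * 1`, which lies in `Q_p^{i+1}` because `1 ∈ Q_p^i`.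
-/

/-- For a prime `p`, the constant `c = ⌈p/2⌉ / p`. -/
noncomputable def ratioC (p : ℕ) : ℝ := (⌈(p : ℝ) / 2⌉ : ℝ) / (p : ℝ)

/-- The sets `Q_p^i ⊆ ℝ`: `Q_p^0 = {0, 1}` and
`Q_p^{i+1} = Q_p^i ∪ {c·x : x ∈ Q_p^i} ∪ {1 − c·x : x ∈ Q_p^i}` where `c = ⌈p/2⌉/p`. -/
noncomputable def Qp (p : ℕ) : ℕ → Set ℝ
  | 0 => {0, 1}
  | i + 1 =>
      Qp p i ∪ (fun x => ratioC p * x) '' Qp p i ∪ (fun x => 1 - ratioC p * x) '' Qp p i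

lemma one_mem_Qp (p i : ℕ) : (1 : ℝ) ∈ Qp p i := by
  induction i with
  | zero => simp [Qp]
  | succ k ih => exact Or.inl (Or.inl ih)

lemma half_le_ratioC {p : ℕ} (hp : 0 < p) : 1 / 2 ≤ ratioC p := by
  have hp' : (0 : ℝ) < p := by exact_mod_cast hp
  rw [ratioC, le_div_iff₀ hp']
  linarith [Int.le_ceil ((p : ℝ) / 2)]

/-- Let `p` be prime, `c = ⌈p/2⌉/p`, `i : ℕ`, `d > 0`. If every
nonempty open subinterval of `[0,1]` of length greater than `d` contains a point of
`Q_p^i`, then every nonempty open subinterval of `[0,1]` of length greater than `c·d`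
contains a point of `Q_p^{i+1}`. -/
theorem Qp_hole_shrinks
    (p : ℕ) (hp : p.Prime) (i : ℕ) (d : ℝ) (hd : 0 < d)
    (h : ∀ a b : ℝ, 0 ≤ a → b ≤ 1 → a < b → d < b - a →
      ∃ x ∈ Qp p i, x ∈ Set.Ioo a b) :
    ∀ a b : ℝ, 0 ≤ a → b ≤ 1 → a < b → ratioC p * d < b - a →
      ∃ x ∈ Qp p (i + 1), x ∈ Set.Ioo a b := by
  intro a b ha hb hab hlen
  have hhalf := half_le_ratioC hp.pos
  have hc : 0 < ratioC p := by linarith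
  by_cases hbc : b ≤ ratioC p
  · obtain ⟨x, hx, hax, hxb⟩ := h (a / ratioC p) (b / ratioC p) (by positivity)
      ((div_le_one hc).2 hbc) (by gcongr)
      (by rw [← sub_div, lt_div_iff₀ hc]; linarith)
    rw [div_lt_iff₀ hc] at hax
    rw [lt_div_iff₀ hc] at hxb
    exact ⟨ratioC p * x, Or.inl (Or.inr ⟨x, hx, rfl⟩), by linarith, by linarith⟩
  by_cases hac : 1 - ratioC p ≤ a
  · obtain ⟨x, hx, hbx, hxa⟩ := h ((1 - b) / ratioC p) ((1 - a) / ratioC p)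
      (div_nonneg (by linarith) hc.le)
      ((div_le_one hc).2 (by linarith)) (by gcongr)
      (by rw [← sub_div, lt_div_iff₀ hc]; linarith)
    rw [div_lt_iff₀ hc] at hbx
    rw [lt_div_iff₀ hc] at hxa
    exact ⟨1 - ratioC p * x, Or.inr ⟨x, hx, rfl⟩, by linarith, by linarith⟩
  · push Not at hbc hac
    exact ⟨ratioC p, Or.inl (Or.inr ⟨1, one_mem_Qp p i, mul_one _⟩), by linarith, hbc⟩
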